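/- Let N ≥ 1 and define r : Sp(2N,ℝ) → Sp(2N,ℝ) by r(g) := (√(g * gᵀ))⁻¹ * g, where √(g * gᵀ) is the unique symmetric positive-definite square root of the positive-definite matrix g * gᵀ. Then: (i) for every g ∈ Sp(2N,ℝ), r(g) is orthogonal and symplectic; (ii) r(u) = u for every orthogonal symplectic u; (iii) r(u₁ * g * u₂) = u₁ * r(g) * u₂ for every g ∈ Sp(2N,ℝ) and all orthogonal symplectic u₁, u₂. In other words, r is a U(N)×U(N)-equivariant retraction of Sp(2N,ℝ) onto its unitary subgroup U(N) = Sp(2N,ℝ) ∩ O(2N). -/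

import Mathlib

open Matrix

/-!
Writing `g = √(g g*) r(g)` exhibits `r(g)` as the unitary factor of the polar decomposition of `g`.
This decomposition is unique, so its unitary factor is compatible with every transformation that
preserves both positive definite and unitary matrices. Left and right multiplication by unitary
matrices gives equivariance; the involution `g ↦ J (gᵀ)⁻¹ J*`, whose fixed points are the symplectic
matrices, shows that the unitary factor of a symplectic matrix is again symplectic.
-/

theorem isUnit_of_mem_unitary {M : Type*} [Monoid M] [StarMul M] {u : M} (hu : u ∈ unitary M) :
    IsUnit u :=
  Unitary.isUnit_coe (U := ⟨u, hu⟩)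

theorem isUnit_of_mul_mul_transpose_eq {n R : Type*} [Fintype n] [DecidableEq n] [CommRing R]
    {g j : Matrix n n R} (hj : IsUnit j) (hg : g * j * gᵀ = j) : IsUnit g := by
  rw [isUnit_iff_isUnit_det] at hj ⊢
  rw [← hg, mul_assoc, det_mul] at hj
  exact isUnit_of_mul_isUnit_left hj

theorem J_mem_unitaryGroup (l R : Type*) [Fintype l] [DecidableEq l] [CommRing R] [StarRing R] :
    J l R ∈ unitaryGroup (l ⊕ l) R := by
  rw [mem_unitaryGroup_iff]
  simp [J, star_eq_conjTranspose, fromBlocks_conjTranspose, fromBlocks_multiply]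

section PolarDecomposition

open scoped ComplexOrder MatrixOrder

theorem posSemidef_eq_of_mul_self_eq {n 𝕜 : Type*} [Fintype n] [RCLike 𝕜] {p q : Matrix n n 𝕜}
    (hp : p.PosSemidef) (hq : q.PosSemidef) (h : p * p = q * q) : p = q := by
  classical exact (CFC.sqrt_unique h hp.nonneg).symm.trans (CFC.sqrt_unique rfl hq.nonneg)

variable {n 𝕜 : Type*} [Fintype n] [DecidableEq n] [RCLike 𝕜] {g p q u v w j : Matrix n n 𝕜}

theorem posDef_mul_star_self (hg : IsUnit g) : (g * star g).PosDef :=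
  PosDef.mul_conjTranspose_self g (vecMul_injective_of_isUnit hg)

/-- `g = p u` is a left polar decomposition: `p` is positive definite and `u` is unitary. Requiring
`p` to be definite restricts the notion to invertible matrices `g`. -/
structure IsPolarDecomposition (g p u : Matrix n n 𝕜) : Prop where
  posDef : p.PosDef
  mem_unitaryGroup : u ∈ unitaryGroup n 𝕜
  mul_eq : p * u = g

namespace IsPolarDecomposition

theorem mul_self_eq (h : IsPolarDecomposition g p u) : p * p = g * star g :=
  calc
    p * p = p * (u * star u) * p := by
      rw [Unitary.mul_star_self_of_mem h.mem_unitaryGroup, mul_one]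
    _ = p * u * (star u * star p) := by
      rw [star_eq_conjTranspose p, h.posDef.isHermitian.eq]
      simp only [mul_assoc]
    _ = g * star g := by rw [← star_mul, h.mul_eq]

theorem unitary_unique (hu : IsPolarDecomposition g p u) (hv : IsPolarDecomposition g q v) :
    u = v := by
  have hpq : p = q := posSemidef_eq_of_mul_self_eq hu.posDef.posSemidef hv.posDef.posSemidef <|
    hu.mul_self_eq.trans hv.mul_self_eq.symm
  refine hu.posDef.isUnit.mul_left_cancel ?_
  rw [hu.mul_eq, hpq, hv.mul_eq]

theorem of_mul_self_eq (hp : p.PosDef) (h : p * p = g * star g) :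
    IsPolarDecomposition g p (p⁻¹ * g) where
  posDef := hp
  mul_eq := mul_nonsing_inv_cancel_left p g ((isUnit_iff_isUnit_det p).1 hp.isUnit)
  mem_unitaryGroup := by
    have hdet : IsUnit p.det := (isUnit_iff_isUnit_det p).1 hp.isUnit
    have hstar : star p⁻¹ = p⁻¹ := hp.inv.isHermitian.eq
    rw [mem_unitaryGroup_iff]
    calc
      p⁻¹ * g * star (p⁻¹ * g) = p⁻¹ * (g * star g) * p⁻¹ := by
        rw [star_mul, hstar]
        simp only [mul_assoc]
      _ = 1 := by rw [← h, nonsing_inv_mul_cancel_left p p hdet, mul_nonsing_inv p hdet]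

theorem of_mem_unitaryGroup (hu : u ∈ unitaryGroup n 𝕜) : IsPolarDecomposition u 1 u :=
  ⟨.one, hu, one_mul u⟩

theorem unitary_mul_mul (h : IsPolarDecomposition g p u) (hv : v ∈ unitaryGroup n 𝕜)
    (hw : w ∈ unitaryGroup n 𝕜) :
    IsPolarDecomposition (v * g * w) (v * p * star v) (v * u * w) where
  posDef := (IsUnit.posDef_star_right_conjugate_iff (isUnit_of_mem_unitary hv)).2 h.posDef
  mem_unitaryGroup := mul_mem (mul_mem hv h.mem_unitaryGroup) hw
  mul_eq :=
    calc
      v * p * star v * (v * u * w) = v * p * (star v * v) * u * w := by simp only [mul_assoc]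
      _ = v * (p * u) * w := by
        rw [Unitary.star_mul_self_of_mem hv, mul_one]
        simp only [mul_assoc]
      _ = v * g * w := by rw [h.mul_eq]

theorem transpose_inv (h : IsPolarDecomposition g p u) :
    IsPolarDecomposition gᵀ⁻¹ pᵀ⁻¹ uᵀ⁻¹ where
  posDef := h.posDef.transpose.inv
  mem_unitaryGroup := by
    have huT := transpose_mem_unitaryGroup_iff.2 h.mem_unitaryGroup
    rw [inv_eq_right_inv (mem_unitaryGroup_iff.1 huT)]
    exact Unitary.star_mem huT
  mul_eq := by rw [← Matrix.mul_inv_rev, ← transpose_mul, h.mul_eq]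

theorem unitary_mul_mul_transpose_eq (h : IsPolarDecomposition g p u)
    (hj : j ∈ unitaryGroup n 𝕜) (hg : g * j * gᵀ = j) : u * j * uᵀ = j := by
  have hgT : IsUnit gᵀ.det := by
    rw [← isUnit_iff_isUnit_det, isUnit_transpose]
    exact isUnit_of_mul_mul_transpose_eq (isUnit_of_mem_unitary hj) hg
  have huT : IsUnit uᵀ.det := by
    rw [← isUnit_iff_isUnit_det, isUnit_transpose]
    exact isUnit_of_mem_unitary h.mem_unitaryGroup
  have hfix : j * gᵀ⁻¹ * star j = g :=
    calc
      j * gᵀ⁻¹ * star j = g * j * gᵀ * gᵀ⁻¹ * star j := by rw [hg]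
      _ = g := by
        rw [mul_nonsing_inv_cancel_right _ _ hgT, mul_assoc, Unitary.mul_star_self_of_mem hj,
          mul_one]
  have htwist : IsPolarDecomposition g (j * pᵀ⁻¹ * star j) (j * uᵀ⁻¹ * star j) := by
    simpa only [hfix] using h.transpose_inv.unitary_mul_mul hj (Unitary.star_mem hj)
  calc
    u * j * uᵀ = j * uᵀ⁻¹ * star j * j * uᵀ := by rw [← h.unitary_unique htwist]
    _ = j := by
      rw [mul_assoc _ (star j), Unitary.star_mul_self_of_mem hj, mul_one,
        nonsing_inv_mul_cancel_right _ _ huT]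

end IsPolarDecomposition

theorem symplectic_retraction_onto_unitary_general {n 𝕜 : Type*} [Fintype n] [DecidableEq n]
    [RCLike 𝕜] (msqrt : Matrix n n 𝕜 → Matrix n n 𝕜)
    (hsqrt : ∀ P : Matrix n n 𝕜, P.PosDef → (msqrt P).PosDef ∧ msqrt P * msqrt P = P)
    (r : Matrix n n 𝕜 → Matrix n n 𝕜) (hr : ∀ g, r g = (msqrt (g * star g))⁻¹ * g) :
    (∀ g, IsUnit g → r g ∈ unitaryGroup n 𝕜) ∧
    (∀ j ∈ unitaryGroup n 𝕜, ∀ g, g * j * gᵀ = j → r g * j * (r g)ᵀ = j) ∧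
    (∀ u ∈ unitaryGroup n 𝕜, r u = u) ∧
    (∀ g, IsUnit g → ∀ u₁ ∈ unitaryGroup n 𝕜, ∀ u₂ ∈ unitaryGroup n 𝕜,
      r (u₁ * g * u₂) = u₁ * r g * u₂) := by
  have hpolar {g : Matrix n n 𝕜} (hg : IsUnit g) :
      IsPolarDecomposition g (msqrt (g * star g)) (r g) := by
    obtain ⟨hpos, hsq⟩ := hsqrt _ (posDef_mul_star_self hg)
    exact hr g ▸ .of_mul_self_eq hpos hsq
  refine ⟨fun g hg ↦ (hpolar hg).mem_unitaryGroup, fun j hj g hg ↦ ?_, fun u hu ↦ ?_,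
    fun g hg u₁ hu₁ u₂ hu₂ ↦ ?_⟩
  · have hunit : IsUnit g := isUnit_of_mul_mul_transpose_eq (isUnit_of_mem_unitary hj) hg
    exact (hpolar hunit).unitary_mul_mul_transpose_eq hj hg
  · exact (hpolar (isUnit_of_mem_unitary hu)).unitary_unique (.of_mem_unitaryGroup hu)
  · have hunit : IsUnit (u₁ * g * u₂) :=
      ((isUnit_of_mem_unitary hu₁).mul hg).mul (isUnit_of_mem_unitary hu₂)
    exact (hpolar hunit).unitary_unique ((hpolar hg).unitary_mul_mul hu₁ hu₂)

end PolarDecomposition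

/-- The map `r(g) = (√(g gᵀ))⁻¹ g` is a `U(N) × U(N)`-equivariant retraction of
`Sp(2N, ℝ)` onto its unitary subgroup `U(N) = Sp(2N, ℝ) ∩ O(2N)`. -/
theorem symplectic_retraction_onto_unitary
    (N : ℕ) (hN : 1 ≤ N)
    (msqrt : Matrix (Fin N ⊕ Fin N) (Fin N ⊕ Fin N) ℝ →
             Matrix (Fin N ⊕ Fin N) (Fin N ⊕ Fin N) ℝ)
    (hsqrt : ∀ P : Matrix (Fin N ⊕ Fin N) (Fin N ⊕ Fin N) ℝ,
      P.PosDef → (msqrt P).PosDef ∧ msqrt P * msqrt P = P)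
    (r : Matrix (Fin N ⊕ Fin N) (Fin N ⊕ Fin N) ℝ →
         Matrix (Fin N ⊕ Fin N) (Fin N ⊕ Fin N) ℝ)
    (hr : ∀ g : Matrix (Fin N ⊕ Fin N) (Fin N ⊕ Fin N) ℝ,
      r g = (msqrt (g * gᵀ))⁻¹ * g) :
    (∀ g ∈ Matrix.symplecticGroup (Fin N) ℝ,
      r g * (r g)ᵀ = 1 ∧ r g ∈ Matrix.symplecticGroup (Fin N) ℝ) ∧
    (∀ u ∈ Matrix.symplecticGroup (Fin N) ℝ, u * uᵀ = 1 → r u = u) ∧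
    (∀ g ∈ Matrix.symplecticGroup (Fin N) ℝ,
      ∀ u₁ ∈ Matrix.symplecticGroup (Fin N) ℝ,
        ∀ u₂ ∈ Matrix.symplecticGroup (Fin N) ℝ,
          u₁ * u₁ᵀ = 1 → u₂ * u₂ᵀ = 1 →
          r (u₁ * g * u₂) = u₁ * r g * u₂) := by
  obtain ⟨unitary, form, fixed, equivariant⟩ :=
    symplectic_retraction_onto_unitary_general msqrt hsqrt r
      (by simpa only [star_eq_conjTranspose, conjTranspose_eq_transpose_of_trivial] using hr)
  have mem_unitaryGroup {u : Matrix (Fin N ⊕ Fin N) (Fin N ⊕ Fin N) ℝ} :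
      u ∈ unitaryGroup (Fin N ⊕ Fin N) ℝ ↔ u * uᵀ = 1 := by
    rw [mem_unitaryGroup_iff, star_eq_conjTranspose, conjTranspose_eq_transpose_of_trivial]
  have isUnit {g} (hg : g ∈ symplecticGroup (Fin N) ℝ) : IsUnit g :=
    (isUnit_iff_isUnit_det g).2 (SymplecticGroup.symplectic_det hg)
  simp only [← mem_unitaryGroup]
  refine ⟨fun g hg ↦ ⟨unitary g (isUnit hg), ?_⟩, fun u _ hu ↦ fixed u hu,
    fun g hg u₁ _ u₂ _ hu₁ hu₂ ↦ equivariant g (isUnit hg) u₁ hu₁ u₂ hu₂⟩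
  rw [SymplecticGroup.mem_iff] at hg ⊢
  exact form (J (Fin N) ℝ) (J_mem_unitaryGroup (Fin N) ℝ) g hg
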